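/- arXiv:hep-th/0301187 — 10 statements merged into one kernel-verified Lean document; each statement's English description precedes it below -/
import Mathlib

section
/- Let n ≥ 2 be a natural number and let α, γ₁, …, γ_m be real numbers satisfying the constraint (n−1)(α² + Σ_{a=1}^m γ_a²) + (α + Σ_{a=1}^m γ_a)² = n together with the horizon condition α + (1/n) Σ_{a=1}^m γ_a ≥ 1. Then necessarily α = 1 and γ_a = 0 for all a = 1, …, m. -/
/-- No-go theorem (algebraic part): if `n ≥ 2` and the exponents satisfy the
vacuum Einstein constraint `(n−1)(α² + Σγ_a²) + (α + Σγ_a)² = n` together with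
the horizon condition `α + (1/n)Σγ_a ≥ 1`, then `α = 1` and all `γ_a = 0`
(the Schwarzschild black hole tensored with flat directions). -/
theorem stmt_1 (n : ℕ) (hn : 2 ≤ n) (m : ℕ) (α : ℝ) (γ : Fin m → ℝ)
    (hcon : ((n : ℝ) - 1) * (α ^ 2 + ∑ a, (γ a) ^ 2) + (α + ∑ a, γ a) ^ 2 = n)
    (hhor : α + (1 / (n : ℝ)) * ∑ a, γ a ≥ 1) :
    α = 1 ∧ ∀ a, γ a = 0 := by
  have hn' : (2 : ℝ) ≤ n := by exact_mod_cast hn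
  have hQ : 0 ≤ ∑ a, (γ a) ^ 2 := Finset.sum_nonneg fun a _ => sq_nonneg _
  obtain ⟨t, ht⟩ : ∃ t : ℝ, ∑ a, γ a = n * t :=
    ⟨(∑ a, γ a) / n, by field_simp⟩
  have h1 : (1 / (n : ℝ)) * ∑ a, γ a = t := by
    rw [ht]; field_simp
  rw [h1] at hhor
  rw [ht] at hcon
  have key : (n : ℝ) * ((α + t) ^ 2 - 1) + n * (n - 1) * t ^ 2
      + (n - 1) * ∑ a, (γ a) ^ 2 = 0 := by linear_combination hcon
  have a1 : 0 ≤ (n : ℝ) * ((α + t) ^ 2 - 1) :=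
    mul_nonneg (by linarith) (by nlinarith)
  have a2 : 0 ≤ (n : ℝ) * (n - 1) * t ^ 2 :=
    mul_nonneg (mul_nonneg (by linarith) (by linarith)) (sq_nonneg t)
  have a3 : 0 ≤ ((n : ℝ) - 1) * ∑ a, (γ a) ^ 2 := mul_nonneg (by linarith) hQ
  have e3 : ((n : ℝ) - 1) * ∑ a, (γ a) ^ 2 = 0 := by linarith
  have e1 : (n : ℝ) * ((α + t) ^ 2 - 1) = 0 := by linarith
  have q0 : ∑ a, (γ a) ^ 2 = 0 :=
    (mul_eq_zero.mp e3).resolve_left (by linarith)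
  have g0 : ∀ a, γ a = 0 := fun a => by
    have := (Finset.sum_eq_zero_iff_of_nonneg (fun a _ => sq_nonneg (γ a))).mp q0 a
      (Finset.mem_univ a)
    exact pow_eq_zero_iff (two_ne_zero) |>.mp this
  have t0 : t = 0 := by
    rw [← h1]; simp [g0]
  have s1 : (α + t) ^ 2 - 1 = 0 := (mul_eq_zero.mp e1).resolve_left (by linarith)
  refine ⟨?_, g0⟩
  subst t0
  nlinarith
end

section
/- Let n ≥ 2 be a natural number. There exist no real numbers α, γ₁, …, γ_m satisfying both (n−1)(2α² + Σ_{a=1}^m γ_a²) + (2α + Σ_{a=1}^m γ_a)² = n and (n+1)α + Σ_{a=1}^m γ_a ≥ n. -/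
/-- Algebraic core of the no-go theorem for horizons in metrics with a null
Killing vector: for `n ≥ 2` there are no real exponents `α, γ₁, …, γ_m` with
`(n−1)(2α² + Σγ_a²) + (2α + Σγ_a)² = n` and `(n+1)α + Σγ_a ≥ n`. -/
theorem stmt_2 (n : ℕ) (hn : 2 ≤ n) :
    ¬ ∃ (m : ℕ) (α : ℝ) (γ : Fin m → ℝ),
      ((n : ℝ) - 1) * (2 * α ^ 2 + ∑ a, (γ a) ^ 2) + (2 * α + ∑ a, γ a) ^ 2 = n ∧
      ((n : ℝ) + 1) * α + ∑ a, γ a ≥ n := by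
  rintro ⟨m, α, γ, h1, h2⟩
  have hn' : (2 : ℝ) ≤ n := by exact_mod_cast hn
  have hS : 0 ≤ ∑ a, (γ a) ^ 2 := Finset.sum_nonneg fun a _ => sq_nonneg _
  have h3 : 0 ≤ ((n : ℝ) - 1) * ∑ a, (γ a) ^ 2 := mul_nonneg (by linarith) hS
  have h4 : 0 ≤ ((n : ℝ) - 1) * (α - 1 / 2) ^ 2 := mul_nonneg (by linarith) (sq_nonneg _)
  have h5 := sq_nonneg (2 * α + ∑ a, γ a - 1)
  nlinarith [h1, h2, h3, h4, h5]
end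

section
/- Let n ≥ 2 be an integer, r₀ > 0, and define on (r₀, ∞) the functions g(r) = 1 − (r₀/r)^{2(n−1)} and f(r) = (1 − (r₀/r)^{n−1})/(1 + (r₀/r)^{n−1}). Then for every r > r₀ one has the identity (g′(r)/g(r))·(g′(r)/g(r) + 2(n−1)/r) = (f′(r)/f(r))². -/
/-- The blackening functions `g(r) = 1 − (r₀/r)^{2(n−1)}` and
`f(r) = (1 − (r₀/r)^{n−1})/(1 + (r₀/r)^{n−1})` satisfy, for `r > r₀ > 0` and `n ≥ 2`,
the identity `(g′/g)(g′/g + 2(n−1)/r) = (f′/f)²`. -/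
theorem stmt_5 (n : ℕ) (hn : 2 ≤ n) (r₀ : ℝ) (hr₀ : 0 < r₀)
    (g f : ℝ → ℝ)
    (hg : ∀ r, g r = 1 - (r₀ / r) ^ (2 * (n - 1)))
    (hf : ∀ r, f r = (1 - (r₀ / r) ^ (n - 1)) / (1 + (r₀ / r) ^ (n - 1))) :
    ∀ r, r₀ < r →
      (deriv g r / g r) * (deriv g r / g r + 2 * ((n : ℝ) - 1) / r)
        = (deriv f r / f r) ^ 2 := by
  intro r hr
  have hrp : 0 < r := hr₀.trans hr
  obtain ⟨m, rfl⟩ : ∃ m, n = m + 2 := ⟨n - 2, by omega⟩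
  have e : m + 2 - 1 = m + 1 := by omega
  rw [e] at hg hf
  have hu : HasDerivAt (fun x : ℝ => (r₀ / x) ^ (m + 1))
      (-(((m : ℝ) + 1) * (r₀ / r) ^ (m + 1) / r)) r := by
    have h := (((hasDerivAt_inv hrp.ne').const_mul r₀).pow (m + 1))
    have h2 : HasDerivAt (fun x : ℝ => (r₀ / x) ^ (m + 1)) _ r := h
    refine h2.congr_deriv ?_
    rw [div_eq_mul_inv r₀ r, pow_succ]
    push_cast
    field_simp
    rw [pow_succ]
    field_simp
  have hu0 : 0 < (r₀ / r) ^ (m + 1) := by positivity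
  have hu1 : (r₀ / r) ^ (m + 1) < 1 :=
    pow_lt_one₀ (by positivity) ((div_lt_one hrp).2 hr) (by omega)
  have hgf : g = fun x => 1 - ((r₀ / x) ^ (m + 1)) ^ 2 := by
    funext x
    rw [hg, mul_comm, pow_mul]
  have hff : f = fun x => (1 - (r₀ / x) ^ (m + 1)) / (1 + (r₀ / x) ^ (m + 1)) := funext hf
  have dg : HasDerivAt g _ r := hgf ▸ (hu.pow 2).const_sub 1
  have df0 := (hu.const_sub 1).div (hu.const_add 1) (by positivity)
  have df1 : HasDerivAt (fun x => (1 - (r₀ / x) ^ (m + 1)) / (1 + (r₀ / x) ^ (m + 1))) _ r := df0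
  have df := df1
  rw [← hff] at df
  rw [dg.deriv, df.deriv, hgf, hff]
  push_cast
  generalize (r₀ / r) ^ (m + 1) = u at *
  have h1 : 1 - u ≠ 0 := by linarith
  have h2 : 1 + u ≠ 0 := by linarith
  have h3 : 1 - u ^ 2 = (1 - u) * (1 + u) := by ring
  simp only [h3]
  field_simp
  ring
end

section
/- Let r₀ > 0, r₁ > r₀, and real constants c₀, 𝒬, μ. On (r₀, ∞) define g(r) = 1 − (r₀/r)¹², f(r) = (1 − (r₀/r)⁶)/(1 + (r₀/r)⁶), and 𝓗(r) = c₀ − (𝒬/(2r₀⁶))·log f(r) − (μ²/8)·∫_{r₁}^{r} s/g(s) ds. Then for all r > r₀, d/dr(r⁷ g(r) 𝓗′(r)) = −μ² r⁷; i.e. 𝓗 solves the curved transverse Laplace equation r^{−7}∂_r(r⁷g∂_r𝓗) = −μ². -/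
open intervalIntegral in
/-- For the SO(8)-invariant non-extremal deformation, the function
`𝓗(r) = c₀ − (𝒬/(2r₀⁶)) log f(r) − (μ²/8) ∫_{r₁}^r s/g(s) ds`, with
`g(r) = 1 − (r₀/r)¹²` and `f(r) = (1 − (r₀/r)⁶)/(1 + (r₀/r)⁶)`, solves the
curved transverse Laplace equation `d/dr(r⁷ g 𝓗′) = −μ² r⁷` on `(r₀, ∞)`. -/
theorem stmt_9 (r₀ r₁ : ℝ) (hr₀ : 0 < r₀) (hr₁ : r₀ < r₁) (c₀ Q μ : ℝ)
    (g f H : ℝ → ℝ)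
    (hg : ∀ r, g r = 1 - (r₀ / r) ^ 12)
    (hf : ∀ r, f r = (1 - (r₀ / r) ^ 6) / (1 + (r₀ / r) ^ 6))
    (hH : ∀ r, H r = c₀ - (Q / (2 * r₀ ^ 6)) * Real.log (f r)
        - (μ ^ 2 / 8) * ∫ s in r₁..r, s / g s) :
    ∀ r, r₀ < r →
      deriv (fun s => s ^ 7 * g s * deriv H s) r = -μ ^ 2 * r ^ 7 := by
  have gpos : ∀ s, r₀ < s → 0 < g s := by
    intro s hs
    have hs0 : 0 < s := hr₀.trans hs
    have h1 : (r₀ / s) ^ 12 < 1 :=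
      pow_lt_one₀ (by positivity) ((div_lt_one hs0).2 hs) (by norm_num)
    rw [hg]; linarith
  have gcont : ∀ s, r₀ < s → ContinuousAt g s := by
    intro s hs
    have hs0 : s ≠ 0 := (hr₀.trans hs).ne'
    have e : g = fun r => 1 - (r₀ / r) ^ 12 := funext hg
    rw [e]
    exact continuousAt_const.sub ((continuousAt_const.div continuousAt_id hs0).pow 12)
  have icont : ContinuousOn (fun s => s / g s) (Set.Ioi r₀) := by
    intro s hs
    exact (continuousAt_id.div (gcont s hs) (gpos s hs).ne').continuousWithinAt
  have key : ∀ s, r₀ < s → s ^ 7 * g s * deriv H s = -6 * Q - μ ^ 2 / 8 * s ^ 8 := by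
    intro s hs
    have hs0 : 0 < s := hr₀.trans hs
    have hI : HasDerivAt (fun r => ∫ t in r₁..r, t / g t) (s / g s) s := by
      apply intervalIntegral.integral_hasDerivAt_right
      · apply ContinuousOn.intervalIntegrable
        apply icont.mono
        intro x hx
        exact lt_of_lt_of_le (lt_min hr₁ hs) hx.1
      · exact icont.stronglyMeasurableAtFilter isOpen_Ioi s hs
      · exact icont.continuousAt (Ioi_mem_nhds hs)
    have hu1 : (r₀ / s) ^ 6 < 1 :=
      pow_lt_one₀ (by positivity) ((div_lt_one hs0).2 hs) (by norm_num)
    have hu0 : 0 < (r₀ / s) ^ 6 := by positivity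
    have hu : HasDerivAt (fun r => (r₀ / r) ^ 6) (-6 * (r₀ / s) ^ 6 / s) s := by
      have h := ((hasDerivAt_const s r₀).div (hasDerivAt_id s) hs0.ne').pow 6
      refine h.congr_deriv ?_
      simp
      field_simp
    have hfd := (hu.const_sub 1).div (hu.const_add 1) (by positivity)
    have hl := hfd.log (div_pos (by linarith) (by linarith)).ne'
    have hHd := ((hl.const_mul (Q / (2 * r₀ ^ 6))).const_sub c₀).sub (hI.const_mul (μ ^ 2 / 8))
    have e : H = fun r => c₀ - (Q / (2 * r₀ ^ 6)) * Real.log ((1 - (r₀ / r) ^ 6) / (1 + (r₀ / r) ^ 6))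
        - (μ ^ 2 / 8) * ∫ s in r₁..r, s / g s := by
      funext r; rw [hH, hf]
    have hd := (hHd.congr_of_eventuallyEq (f₁ := H) (Filter.Eventually.of_forall (congrFun e))).deriv
    rw [hd]
    clear hd hHd hl hfd hu hI
    have hgs : g s = (1 - (r₀ / s) ^ 6) * (1 + (r₀ / s) ^ 6) := by rw [hg]; ring
    have hr : r₀ ^ 6 = (r₀ / s) ^ 6 * s ^ 6 := by field_simp
    rw [hgs, hr]
    simp only [Pi.div_apply]
    clear hr hgs
    generalize (r₀ / s) ^ 6 = u at hu0 hu1 ⊢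
    have h0 : u ≠ 0 := hu0.ne'
    have h1 : 1 - u ≠ 0 := (sub_pos.2 hu1).ne'
    have h2 : 1 + u ≠ 0 := by positivity
    field_simp
    ring
  intro r hr
  have hr0 : 0 < r := hr₀.trans hr
  have ev : (fun s => s ^ 7 * g s * deriv H s) =ᶠ[nhds r] fun s => -6 * Q - μ ^ 2 / 8 * s ^ 8 := by
    filter_upwards [Ioi_mem_nhds hr] with s hs using key s hs
  rw [ev.deriv_eq]
  have := (((hasDerivAt_id r).pow 8).const_mul (μ ^ 2 / 8)).const_sub (-6 * Q)
  refine (this.congr_deriv ?_).deriv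
  simp
  ring
end

section
/- Let L, μ, c₀, 𝒬 be real numbers and define, for r > 0 and (x, y) ∈ ℝ², the function 𝓗(r, x, y) = c₀ + 𝒬/r⁴ − (μ²/16)(r² + x² + y² + L⁴/r²). Then 𝓗 satisfies the equation ∂_r²𝓗 + (5/r)∂_r𝓗 + (1 + L⁴/r⁴)(∂_x²𝓗 + ∂_y²𝓗) = −μ² for all r > 0 and all x, y. -/
/-- The plane-wave function for the 𝓗-deformed D3 (+,−,1,1) brane:
`𝓗(r,x,y) = c₀ + 𝒬/r⁴ − (μ²/16)(r² + x² + y² + L⁴/r²)` satisfies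
`∂_r²𝓗 + (5/r)∂_r𝓗 + (1 + L⁴/r⁴)(∂_x²𝓗 + ∂_y²𝓗) = −μ²` for all `r > 0`, `x`, `y`. -/
theorem stmt_10 (L μ c₀ Q : ℝ) (H : ℝ → ℝ → ℝ → ℝ)
    (hH : ∀ r x y, H r x y
        = c₀ + Q / r ^ 4 - (μ ^ 2 / 16) * (r ^ 2 + x ^ 2 + y ^ 2 + L ^ 4 / r ^ 2)) :
    ∀ r x y : ℝ, 0 < r →
      deriv (deriv (fun s => H s x y)) r + (5 / r) * deriv (fun s => H s x y) r
        + (1 + L ^ 4 / r ^ 4) *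
            (deriv (deriv (fun u => H r u y)) x + deriv (deriv (fun v => H r x v)) y)
        = -μ ^ 2 := by
  intro r x y hr
  have hq : ∀ a b : ℝ, ∀ t : ℝ, HasDerivAt (fun u : ℝ => a - b * u ^ 2) (-(2 * b) * t) t := by
    intro a b t
    have h := ((hasDerivAt_pow 2 t).const_mul b).const_sub a
    refine h.congr_deriv ?_
    push_cast
    ring
  have hq2 : ∀ a b t : ℝ, deriv (deriv (fun u : ℝ => a - b * u ^ 2)) t = -(2 * b) := by
    intro a b t
    have h1 : deriv (fun u : ℝ => a - b * u ^ 2) = fun t => -(2 * b) * t :=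
      funext fun t => (hq a b t).deriv
    rw [h1]
    simpa using ((hasDerivAt_id t).const_mul (-(2 * b))).deriv
  have hx : (fun u => H r u y) = fun u : ℝ =>
      (c₀ + Q / r ^ 4 - (μ ^ 2 / 16) * (r ^ 2 + y ^ 2 + L ^ 4 / r ^ 2)) - (μ ^ 2 / 16) * u ^ 2 := by
    funext u
    rw [hH]
    ring
  have hy : (fun v => H r x v) = fun u : ℝ =>
      (c₀ + Q / r ^ 4 - (μ ^ 2 / 16) * (r ^ 2 + x ^ 2 + L ^ 4 / r ^ 2)) - (μ ^ 2 / 16) * u ^ 2 := by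
    funext u
    rw [hH]
    ring
  have hp : ∀ (c : ℝ) (n : ℕ) (t : ℝ), 0 < t →
      HasDerivAt (fun s : ℝ => c / s ^ (n + 1)) (-((n + 1) * c) / t ^ (n + 2)) t := by
    intro c n t ht
    have h := (hasDerivAt_const t c).fun_div (hasDerivAt_pow (n + 1) t) (by positivity)
    refine h.congr_deriv ?_
    have := ht.ne'
    simp only [Nat.add_sub_cancel]
    push_cast
    field_simp
    ring
  have h1 : ∀ t : ℝ, 0 < t → HasDerivAt (fun s => H s x y)
      (-(4 * Q) / t ^ 5 - (μ ^ 2 / 16) * (2 * t + -(2 * L ^ 4) / t ^ 3)) t := by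
    intro t ht
    have h := ((hp Q 3 t ht).const_add c₀).fun_sub
      (((((hasDerivAt_pow 2 t).add_const (x ^ 2)).add_const (y ^ 2)).fun_add
        (hp (L ^ 4) 1 t ht)).const_mul (μ ^ 2 / 16))
    have e : (fun s => H s x y) = fun r : ℝ =>
      c₀ + Q / r ^ 4 - (μ ^ 2 / 16) * (r ^ 2 + x ^ 2 + y ^ 2 + L ^ 4 / r ^ 2) :=
      funext fun s => hH s x y
    rw [e]
    refine h.congr_deriv ?_
    norm_num
  have h2 : HasDerivAt (deriv (fun s => H s x y))
      (20 * Q / r ^ 6 - (μ ^ 2 / 16) * (2 + 6 * L ^ 4 / r ^ 4)) r := by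
    have h := (hp (-(4 * Q)) 4 r hr).fun_sub
      ((((hasDerivAt_id' r).const_mul 2).fun_add
        (hp (-(2 * L ^ 4)) 2 r hr)).const_mul (μ ^ 2 / 16))
    have h' := h.congr_of_eventuallyEq (f₁ := deriv (fun s => H s x y)) (by
      filter_upwards [lt_mem_nhds hr] with t ht
      exact (h1 t ht).deriv)
    refine h'.congr_deriv ?_
    push_cast
    ring
  rw [h2.deriv, (h1 r hr).deriv, hx, hy, hq2, hq2]
  field_simp
  ring
end

section
/- Let μ, c₀, Q_w, Q₅ be real numbers and define, for r > 0 and \vec y = (y₁, y₂, y₃, y₄) ∈ ℝ⁴, the function 𝓗(r, \vec y) = c₀ + Q_w/r² − (μ²/16)(r² + |\vec y|² − 4Q₅ log r). Then 𝓗 satisfies ∂_r²𝓗 + (3/r)∂_r𝓗 + (1 + Q₅/r²)·Σ_{a=1}^4 ∂_{y_a}²𝓗 = −μ² for all r > 0 and all \vec y ∈ ℝ⁴. -/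
/-- The plane-wave function for the 𝓗-deformed extremal D1-D5 system:
`𝓗(r, y) = c₀ + Q_w/r² − (μ²/16)(r² + |y|² − 4Q₅ log r)` (with `y ∈ ℝ⁴`) satisfies
`∂_r²𝓗 + (3/r)∂_r𝓗 + (1 + Q₅/r²)·Σ_a ∂_{y_a}²𝓗 = −μ²` for all `r > 0`, `y ∈ ℝ⁴`. -/
theorem stmt_12 (μ c₀ Qw Q₅ : ℝ) (H : ℝ → (Fin 4 → ℝ) → ℝ)
    (hH : ∀ r y, H r y
        = c₀ + Qw / r ^ 2
          - (μ ^ 2 / 16) * (r ^ 2 + (∑ a, (y a) ^ 2) - 4 * Q₅ * Real.log r)) :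
    ∀ (r : ℝ) (y : Fin 4 → ℝ), 0 < r →
      deriv (deriv (fun s => H s y)) r + (3 / r) * deriv (fun s => H s y) r
        + (1 + Q₅ / r ^ 2) *
            (∑ a, deriv (deriv (fun t => H r (Function.update y a t))) (y a))
        = -μ ^ 2 := by
  intro r y hr
  have h1 : ∀ s : ℝ, 0 < s → HasDerivAt (fun s => H s y)
      (-2 * Qw / s ^ 3 - (μ ^ 2 / 16) * (2 * s - 4 * Q₅ / s)) s := by
    intro s hs
    have e : (fun s => H s y) = fun s => c₀ + Qw / s ^ 2
          - (μ ^ 2 / 16) * (s ^ 2 + (∑ a, (y a) ^ 2) - 4 * Q₅ * Real.log s) := by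
      funext s
      exact hH s y
    rw [e]
    have hne : s ≠ 0 := hs.ne'
    have hp : HasDerivAt (fun s : ℝ => s ^ 2) (2 * s) s := by
      simpa using hasDerivAt_pow 2 s
    have hq := ((hasDerivAt_const s Qw).fun_div hp (pow_ne_zero 2 hne)).const_add c₀
    have hl := (Real.hasDerivAt_log hne).const_mul (4 * Q₅)
    refine (hq.fun_sub (((hp.add_const (∑ a, (y a) ^ 2)).fun_sub hl).const_mul
      (μ ^ 2 / 16))).congr_deriv ?_
    field_simp
    ring
  have h2 : HasDerivAt (fun s : ℝ => -2 * Qw / s ^ 3 - (μ ^ 2 / 16) * (2 * s - 4 * Q₅ / s))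
      (6 * Qw / r ^ 4 - (μ ^ 2 / 16) * (2 + 4 * Q₅ / r ^ 2)) r := by
    have hne : r ≠ 0 := hr.ne'
    have hp : HasDerivAt (fun s : ℝ => s ^ 3) (3 * r ^ 2) r := by
      simpa using hasDerivAt_pow 3 r
    have hq := (hasDerivAt_const r (-2 * Qw)).fun_div hp (pow_ne_zero 3 hne)
    have hl := (hasDerivAt_const r (4 * Q₅)).fun_div (hasDerivAt_id' r) hne
    refine (hq.fun_sub ((((hasDerivAt_id' r).const_mul 2).fun_sub hl).const_mul
      (μ ^ 2 / 16))).congr_deriv ?_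
    field_simp
    ring
  have h3 : deriv (deriv (fun s => H s y)) r
      = 6 * Qw / r ^ 4 - (μ ^ 2 / 16) * (2 + 4 * Q₅ / r ^ 2) := by
    rw [← h2.deriv]
    apply Filter.EventuallyEq.deriv_eq
    filter_upwards [lt_mem_nhds hr] with s hs
    exact (h1 s hs).deriv
  have h4 : ∀ a, deriv (deriv (fun t => H r (Function.update y a t))) (y a) = -(μ ^ 2 / 8) := by
    intro a
    have e : (fun t => H r (Function.update y a t)) = fun t => (H r (Function.update y a 0))
        - (μ ^ 2 / 16) * t ^ 2 := by
      funext t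
      rw [hH, hH]
      fin_cases a <;> simp [Fin.sum_univ_four, Function.update] <;> ring
    have e2 : deriv (fun t => H r (Function.update y a t)) = fun t => -(μ ^ 2 / 8) * t := by
      funext t
      rw [e]
      have hp : HasDerivAt (fun s : ℝ => s ^ 2) (2 * t) t := by
        simpa using hasDerivAt_pow 2 t
      rw [((hp.const_mul (μ ^ 2 / 16)).const_sub _).deriv]
      ring
    rw [e2]
    simpa using ((hasDerivAt_id' (y a)).const_mul (-(μ ^ 2 / 8))).deriv
  rw [h3, (h1 r hr).deriv, Finset.sum_congr rfl (fun a _ => h4 a)]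
  have hne : r ≠ 0 := hr.ne'
  simp only [Finset.sum_const, Finset.card_univ, Fintype.card_fin, nsmul_eq_mul]
  push_cast
  field_simp
  ring
end

section
/- Let r₀ > 0, λ ≠ 0, and L, c real. Define on (r₀, ∞): f(r) = (1 − (r₀/r)⁴)/(1 + (r₀/r)⁴), g(r) = 1 − (r₀/r)⁸, and H(r) = (L⁴/(2λr₀⁴))·sinh(c − λ log f(r)). Then for all r > r₀, (H′(r))² − λ²·H(r)²·(f′(r)/f(r))² = 16L⁸/(r¹⁰ g(r)²). -/
/-- The first-order equation solved by `H = e^{−8Â/3}` for the non-extremal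
fundamental string deformation: with `f(r) = (1 − (r₀/r)⁴)/(1 + (r₀/r)⁴)`,
`g(r) = 1 − (r₀/r)⁸` and `H(r) = (L⁴/(2lamr₀⁴)) sinh(c − lam log f(r))`, one has
`(H′)² − lam²H²(f′/f)² = 16L⁸/(r¹⁰g²)` for all `r > r₀`. -/
theorem stmt_13 (r₀ lam L c : ℝ) (hr₀ : 0 < r₀) (hlam : lam ≠ 0)
    (f g H : ℝ → ℝ)
    (hf : ∀ r, f r = (1 - (r₀ / r) ^ 4) / (1 + (r₀ / r) ^ 4))
    (hg : ∀ r, g r = 1 - (r₀ / r) ^ 8)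
    (hH : ∀ r, H r = (L ^ 4 / (2 * lam * r₀ ^ 4)) * Real.sinh (c - lam * Real.log (f r))) :
    ∀ r, r₀ < r →
      (deriv H r) ^ 2 - lam ^ 2 * (H r) ^ 2 * (deriv f r / f r) ^ 2
        = 16 * L ^ 8 / (r ^ 10 * (g r) ^ 2) := by
  intro r hr
  have hrp : 0 < r := hr₀.trans hr
  have hu : HasDerivAt (fun x : ℝ => (r₀ / x) ^ 4) (-4 * (r₀ / r) ^ 4 / r) r := by
    have h1 := ((hasDerivAt_inv hrp.ne').const_mul r₀).fun_pow 4
    simp only [← div_eq_mul_inv] at h1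
    refine h1.congr_deriv ?_
    norm_num
    field_simp
  have hlt : (r₀ / r) ^ 4 < 1 :=
    pow_lt_one₀ (by positivity) ((div_lt_one hrp).2 hr) (by norm_num)
  have hg' : g r = 1 - ((r₀ / r) ^ 4) ^ 2 := by rw [hg]; ring
  have hpos : 0 < (r₀ / r) ^ 4 := by positivity
  have hq : (r₀ / r) ^ 4 = r₀ ^ 4 / r ^ 4 := div_pow _ _ _
  have hfe : f = fun x => (1 - (r₀ / x) ^ 4) / (1 + (r₀ / x) ^ 4) := funext hf
  have hHe : H = fun x => (L ^ 4 / (2 * lam * r₀ ^ 4)) *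
      Real.sinh (c - lam * Real.log (f x)) := funext hH
  have hfd := (hu.const_sub 1).fun_div (hu.const_add 1) (by positivity)
  rw [← hfe] at hfd
  have hfr := hf r
  generalize (r₀ / r) ^ 4 = u at *
  have h1 : 1 - u ≠ 0 := by linarith
  have h2 : 1 + u ≠ 0 := by linarith
  have hf0 : f r ≠ 0 := by rw [hfr]; exact div_ne_zero h1 h2
  have hg0 : g r ≠ 0 := by
    rw [hg', show 1 - u ^ 2 = (1 - u) * (1 + u) by ring]; exact mul_ne_zero h1 h2
  have hfd' := hfd.differentiableAt.hasDerivAt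
  have hlog : deriv f r / f r = 8 * u / (r * g r) := by
    rw [div_eq_div_iff hf0 (mul_ne_zero hrp.ne' hg0), hfd.deriv, hfr, hg']
    field_simp
    ring
  have hHd := (((hfd'.log hf0).const_mul lam).const_sub c).sinh.const_mul
    (L ^ 4 / (2 * lam * r₀ ^ 4))
  rw [← hHe] at hHd
  rw [hHd.deriv, hH r, hlog]
  generalize c - lam * Real.log (f r) = t
  have hc := Real.cosh_sq t
  have : (L ^ 4 / (2 * lam * r₀ ^ 4) * (Real.cosh t * -(lam * (8 * u / (r * g r))))) ^ 2 -
      lam ^ 2 * (L ^ 4 / (2 * lam * r₀ ^ 4) * Real.sinh t) ^ 2 * (8 * u / (r * g r)) ^ 2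
      = (L ^ 4 / (2 * lam * r₀ ^ 4) * lam * (8 * u / (r * g r))) ^ 2 := by
    linear_combination (L ^ 4 / (2 * lam * r₀ ^ 4) * lam * (8 * u / (r * g r))) ^ 2 * hc
  rw [this, hq]
  field_simp
  ring
end

section
/- Let r₀ > 0, λ ≠ 0, and L, c real. Define on (r₀, ∞): f(r) = (1 − (r₀/r)²)/(1 + (r₀/r)²), g(r) = 1 − (r₀/r)⁴, and H(r) = (L²/(2λr₀²))·sinh(c − λ log f(r)). Then for all r > r₀, (H′(r))² − λ²·H(r)²·(f′(r)/f(r))² = 4L⁴/(r⁶ g(r)²). -/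
/-- The first-order equation solved by `H = e^{−4Â}` for the non-extremal
D3 (+,−,2,0) deformation: with `f(r) = (1 − (r₀/r)²)/(1 + (r₀/r)²)`,
`g(r) = 1 − (r₀/r)⁴` and `H(r) = (L²/(2lamr₀²)) sinh(c − lam log f(r))`, one has
`(H′)² − lam²H²(f′/f)² = 4L⁴/(r⁶g²)` for all `r > r₀`. -/
theorem stmt_14 (r₀ lam L c : ℝ) (hr₀ : 0 < r₀) (hlam : lam ≠ 0)
    (f g H : ℝ → ℝ)
    (hf : ∀ r, f r = (1 - (r₀ / r) ^ 2) / (1 + (r₀ / r) ^ 2))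
    (hg : ∀ r, g r = 1 - (r₀ / r) ^ 4)
    (hH : ∀ r, H r = (L ^ 2 / (2 * lam * r₀ ^ 2)) * Real.sinh (c - lam * Real.log (f r))) :
    ∀ r, r₀ < r →
      (deriv H r) ^ 2 - lam ^ 2 * (H r) ^ 2 * (deriv f r / f r) ^ 2
        = 4 * L ^ 4 / (r ^ 6 * (g r) ^ 2) := by
  intro r hr
  have hr0 : 0 < r := hr₀.trans hr
  have hrne : r ≠ 0 := hr0.ne'
  have hd : 0 < r ^ 2 - r₀ ^ 2 := by nlinarith
  have hs : 0 < r ^ 2 + r₀ ^ 2 := by positivity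
  have hfe : ∀ x, x ≠ 0 → f x = (x ^ 2 - r₀ ^ 2) / (x ^ 2 + r₀ ^ 2) := by
    intro x hx
    have h1 : x ^ 2 + r₀ ^ 2 ≠ 0 := by positivity
    rw [hf]
    field_simp
  have hfr := hfe r hrne
  have hfpos : 0 < f r := by rw [hfr]; positivity
  have hfd : HasDerivAt f (4 * r * r₀ ^ 2 / (r ^ 2 + r₀ ^ 2) ^ 2) r := by
    have h1 : HasDerivAt (fun x : ℝ => (x ^ 2 - r₀ ^ 2) / (x ^ 2 + r₀ ^ 2))
        (((2 * r) * (r ^ 2 + r₀ ^ 2) - (r ^ 2 - r₀ ^ 2) * (2 * r)) / (r ^ 2 + r₀ ^ 2) ^ 2) r := by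
      have h2 : HasDerivAt (fun x : ℝ => x ^ 2) (2 * r) r := by
        simpa using hasDerivAt_pow 2 r
      exact (h2.sub_const _).div (h2.add_const _) hs.ne'
    have h3 := h1.congr_of_eventuallyEq (f₁ := f)
      ((eventually_ne_nhds hrne).mono fun x hx => hfe x hx)
    have h4 : 4 * r * r₀ ^ 2 / (r ^ 2 + r₀ ^ 2) ^ 2 =
        ((2 * r) * (r ^ 2 + r₀ ^ 2) - (r ^ 2 - r₀ ^ 2) * (2 * r)) / (r ^ 2 + r₀ ^ 2) ^ 2 := by
      congr 1
      ring
    rw [h4]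
    exact h3
  have hHd := (((hfd.log hfpos.ne').const_mul lam).const_sub c).sinh.const_mul
    (L ^ 2 / (2 * lam * r₀ ^ 2))
  have hHeq : H = fun x => (L ^ 2 / (2 * lam * r₀ ^ 2)) * Real.sinh (c - lam * Real.log (f x)) :=
    funext hH
  rw [← hHeq] at hHd
  rw [hHd.deriv, hfd.deriv, hH r, hg r]
  have hc := Real.cosh_sq (c - lam * Real.log (f r))
  generalize hq : 4 * r * r₀ ^ 2 / (r ^ 2 + r₀ ^ 2) ^ 2 / f r = q
  have hqv : q = 4 * r * r₀ ^ 2 / ((r ^ 2 - r₀ ^ 2) * (r ^ 2 + r₀ ^ 2)) := by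
    rw [← hq, hfr]
    field_simp
  have hgv : 1 - (r₀ / r) ^ 4 = (r ^ 2 - r₀ ^ 2) * (r ^ 2 + r₀ ^ 2) / r ^ 4 := by
    field_simp
    ring
  generalize Real.cosh (c - lam * Real.log (f r)) = C at *
  generalize Real.sinh (c - lam * Real.log (f r)) = S at *
  have e : (L ^ 2 / (2 * lam * r₀ ^ 2) * (C * -(lam * q))) ^ 2
      - lam ^ 2 * (L ^ 2 / (2 * lam * r₀ ^ 2) * S) ^ 2 * q ^ 2
      = (L ^ 2 / (2 * lam * r₀ ^ 2)) ^ 2 * lam ^ 2 * q ^ 2 := by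
    linear_combination (L ^ 2 / (2 * lam * r₀ ^ 2)) ^ 2 * lam ^ 2 * q ^ 2 * hc
  rw [e, hqv, hgv]
  field_simp
  try ring
end

section
/- For all real numbers γ, δ, λ satisfying λ² = 3 − 8δ² + 8δγ − 4γ², one has 2δ − |λ| < 3. Equivalently, there exist no real γ, δ, λ with λ² = 3 − 8δ² + 8δγ − 4γ² and −|λ| + 2δ ≥ 3. -/
/-- For the non-extremal D3 (+,−,2,0) deformation: whenever
`λ² = 3 − 8δ² + 8δγ − 4γ²`, one has `2δ − |λ| < 3`; equivalently there are no
real `γ, δ, λ` with `λ² = 3 − 8δ² + 8δγ − 4γ²` and `−|λ| + 2δ ≥ 3`. -/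
theorem stmt_17 :
    (∀ γ δ lam : ℝ, lam ^ 2 = 3 - 8 * δ ^ 2 + 8 * δ * γ - 4 * γ ^ 2 →
      2 * δ - |lam| < 3) ∧
    (¬ ∃ γ δ lam : ℝ, lam ^ 2 = 3 - 8 * δ ^ 2 + 8 * δ * γ - 4 * γ ^ 2 ∧
      -|lam| + 2 * δ ≥ 3) := by
  have key : ∀ γ δ lam : ℝ, lam ^ 2 = 3 - 8 * δ ^ 2 + 8 * δ * γ - 4 * γ ^ 2 →
      2 * δ - |lam| < 3 := by
    intro γ δ lam h
    have h0 := abs_nonneg lam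
    have h1 : 2 * δ < 3 := by
      nlinarith [sq_nonneg (δ - γ), sq_nonneg lam, sq_nonneg (2 * δ - 3)]
    linarith
  refine ⟨key, ?_⟩
  rintro ⟨γ, δ, lam, h, h'⟩
  have := key γ δ lam h
  linarith
end

section
/- Let Q₁ > 0, λ₁ > 0, r₀ > 0, and let c₁ be the real number with sinh c₁ = 2λ₁r₀²/Q₁. Define on (r₀, ∞): f(r) = (1 − (r₀/r)²)/(1 + (r₀/r)²) and H₁(r) = (Q₁/(2λ₁r₀²))·sinh(c₁ − λ₁ log f(r)). Then H₁(r) → 1 as r → ∞, and moreover lim_{r→∞} r²·(H₁(r) − 1) = √(Q₁² + 4λ₁²r₀⁴). -/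
open Filter Topology

/-- Charge renormalization in the non-extremal D1-D5 deformation: with
`f(r) = (1 − (r₀/r)²)/(1 + (r₀/r)²)` and
`H₁(r) = (Q₁/(2λ₁r₀²)) sinh(c₁ − λ₁ log f(r))`, where `sinh c₁ = 2λ₁r₀²/Q₁`,
one has `H₁(r) → 1` as `r → ∞` and `r²(H₁(r) − 1) → √(Q₁² + 4λ₁²r₀⁴)`. -/
theorem stmt_19 (Q₁ lam₁ r₀ c₁ : ℝ) (hQ : 0 < Q₁) (hlam : 0 < lam₁) (hr₀ : 0 < r₀)
    (hc₁ : Real.sinh c₁ = 2 * lam₁ * r₀ ^ 2 / Q₁)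
    (f H₁ : ℝ → ℝ)
    (hf : ∀ r, f r = (1 - (r₀ / r) ^ 2) / (1 + (r₀ / r) ^ 2))
    (hH₁ : ∀ r, H₁ r
        = (Q₁ / (2 * lam₁ * r₀ ^ 2)) * Real.sinh (c₁ - lam₁ * Real.log (f r))) :
    Tendsto H₁ atTop (𝓝 1) ∧
    Tendsto (fun r => r ^ 2 * (H₁ r - 1)) atTop
      (𝓝 (Real.sqrt (Q₁ ^ 2 + 4 * lam₁ ^ 2 * r₀ ^ 4))) := by
  have hA : 2 * lam₁ * r₀ ^ 2 ≠ 0 := by positivity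
  set g : ℝ → ℝ := fun x => (Q₁ / (2 * lam₁ * r₀ ^ 2)) *
    Real.sinh (c₁ - lam₁ * Real.log ((1 - r₀ ^ 2 * x) / (1 + r₀ ^ 2 * x))) with hg
  have hHg : ∀ r, H₁ r = g ((r ^ 2)⁻¹) := by
    intro r
    rw [hH₁, hf, hg]
    simp only [div_eq_mul_inv, mul_pow, inv_pow]
  have hg0 : g 0 = 1 := by
    simp only [hg, mul_zero, sub_zero, add_zero, div_one, Real.log_one, hc₁]
    field_simp
  have hS : Real.sqrt (Q₁ ^ 2 + 4 * lam₁ ^ 2 * r₀ ^ 4) = Q₁ * Real.cosh c₁ := by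
    have h2 : Q₁ ^ 2 + 4 * lam₁ ^ 2 * r₀ ^ 4 = (Q₁ * Real.cosh c₁) ^ 2 := by
      rw [mul_pow, Real.cosh_sq, hc₁]
      field_simp
      ring
    rw [h2, Real.sqrt_sq (mul_nonneg hQ.le (Real.cosh_pos _).le)]
  have hd : HasDerivAt g (Q₁ * Real.cosh c₁) 0 := by
    have hm : HasDerivAt (fun x : ℝ => r₀ ^ 2 * x) (r₀ ^ 2) 0 := by
      simpa using (hasDerivAt_id (0 : ℝ)).const_mul (r₀ ^ 2)
    have hq := (hm.const_sub 1).fun_div (hm.const_add 1) (by simp)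
    have h3 := ((((hq.log (by simp)).const_mul lam₁).const_sub c₁).sinh).const_mul
      (Q₁ / (2 * lam₁ * r₀ ^ 2))
    refine h3.congr_deriv ?_
    simp only [mul_zero, sub_zero, add_zero, div_one, Real.log_one]
    field_simp
    ring
  have hx : Tendsto (fun r : ℝ => (r ^ 2)⁻¹) atTop (𝓝[≠] 0) := by
    refine tendsto_nhdsWithin_iff.2 ⟨(tendsto_pow_atTop two_ne_zero).inv_tendsto_atTop, ?_⟩
    filter_upwards [eventually_gt_atTop 0] with r hr
    simp [hr.ne']
  constructor
  · have h := hd.continuousAt.tendsto.comp (hx.mono_right nhdsWithin_le_nhds)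
    rw [hg0] at h
    exact h.congr fun r => (hHg r).symm
  · rw [hS]
    have h := (hasDerivAt_iff_tendsto_slope.1 hd).comp hx
    refine h.congr fun r => ?_
    simp [slope_def_field, hHg, hg0, mul_comm]
end
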